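/- Let M be a group that is generated by a set S of elements of finite order, and suppose M has a central subgroup Z (i.e., Z is contained in the center of M) such that the quotient group M/Z is locally finite. Then M is locally finite. -/

import Mathlib

/-!
A finitely generated subgroup of `M` lies in a subgroup `K` generated by finitely many elements
of `S`, so it suffices that every such `K` is finite. The image of `K` in `M ⧸ Z` is finite, hence
the center of `K` has finite index `n`. By transfer, `g ↦ g ^ n` is a homomorphism from `K` to its
(abelian) center; as `K` is generated by elements of finite order, its values are all torsion, so
`K` is a torsion group. By Schreier's lemma the center of `K` is finitely generated, and a finitely
generated abelian torsion group is finite, so `K` is finite.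
-/

/-- A group is locally finite if every finitely generated subgroup is finite. -/
def LocallyFiniteGroup (K : Type*) [Group K] : Prop :=
  ∀ S : Subgroup K, S.FG → Finite S

open scoped IsMulCommutative in
/-- Torsion is inherited from the generators because `g ↦ g ^ [G : Z(G)]` is a homomorphism to an
abelian group, namely the transfer to the center. -/
theorem isMulTorsion_of_finiteIndex_center {G : Type*} [Group G] (F : Set G)
    (hF : Subgroup.closure F = ⊤) (hord : ∀ s ∈ F, IsOfFinOrder s)
    [(Subgroup.center G).FiniteIndex] : IsMulTorsion G := by
  have hle : Subgroup.closure F ≤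
      (CommGroup.torsion (Subgroup.center G)).comap (MonoidHom.transferCenterPow G) := by
    rw [Subgroup.closure_le]
    intro s hs
    exact MonoidHom.isOfFinOrder _ (hord s hs)
  intro g
  have hg : IsOfFinOrder (MonoidHom.transferCenterPow G g) := hle (hF ▸ Subgroup.mem_top g)
  have hpow : IsOfFinOrder (g ^ (Subgroup.center G).index) := by
    simpa using (Subgroup.center G).subtype.isOfFinOrder hg
  exact hpow.of_pow Subgroup.FiniteIndex.index_ne_zero

open scoped IsMulCommutative in
theorem finite_of_isMulTorsion_of_finiteIndex_center {G : Type*} [Group G] [Group.FG G]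
    [(Subgroup.center G).FiniteIndex] (hG : IsMulTorsion G) : Finite G := by
  -- Finite generation of the center is Schreier's lemma, found by instance search.
  have hfin : Finite (Subgroup.center G) :=
    CommGroup.finite_of_fg_isMulTorsion _ (hG.subgroup _)
  apply Nat.finite_of_card_ne_zero
  rw [← (Subgroup.center G).card_mul_index]
  exact mul_ne_zero Nat.card_pos.ne' Subgroup.FiniteIndex.index_ne_zero

theorem exists_finite_subset_mem_closure {G : Type*} [Group G] {S : Set G} {x : G}
    (hx : x ∈ Subgroup.closure S) :
    ∃ F : Set G, F.Finite ∧ F ⊆ S ∧ x ∈ Subgroup.closure F := by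
  induction hx using Subgroup.closure_induction with
  | mem x hx =>
    exact ⟨{x}, Set.finite_singleton x, Set.singleton_subset_iff.2 hx,
      Subgroup.subset_closure rfl⟩
  | one => exact ⟨∅, Set.finite_empty, Set.empty_subset _, one_mem _⟩
  | mul x y _ _ hx hy =>
    obtain ⟨A, hA, hAS, hxA⟩ := hx
    obtain ⟨B, hB, hBS, hyB⟩ := hy
    exact ⟨A ∪ B, hA.union hB, Set.union_subset hAS hBS,
      mul_mem (Subgroup.closure_mono Set.subset_union_left hxA)
        (Subgroup.closure_mono Set.subset_union_right hyB)⟩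
  | inv x _ hx =>
    obtain ⟨A, hA, hAS, hxA⟩ := hx
    exact ⟨A, hA, hAS, inv_mem hxA⟩

theorem finite_closure_of_central_quotient {M : Type*} [Group M] {F : Set M} (hFfin : F.Finite)
    (hord : ∀ s ∈ F, IsOfFinOrder s) (Z : Subgroup M) [Z.Normal] (hZ : Z ≤ Subgroup.center M)
    (hq : LocallyFiniteGroup (M ⧸ Z)) : Finite (Subgroup.closure F) := by
  have hgen := Subgroup.closure_closure_coe_preimage (k := F)
  generalize hK : Subgroup.closure F = K at hgen ⊢
  have hKfg : K.FG := (Subgroup.fg_iff K).2 ⟨F, hK, hFfin⟩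
  have : Group.FG K := (Group.fg_iff_subgroup_fg K).2 hKfg
  let f : K →* M ⧸ Z := (QuotientGroup.mk' Z).comp K.subtype
  have : Finite f.range :=
    hq _ ((Group.fg_iff_subgroup_fg _).1 (Group.fg_range f))
  have hker : f.ker ≤ Subgroup.center K := by
    intro k hk
    have hkZ : (k : M) ∈ Z := (QuotientGroup.eq_one_iff (k : M)).1 hk
    rw [Subgroup.mem_center_iff]
    intro g
    exact Subtype.ext (Subgroup.mem_center_iff.1 (hZ hkZ) g)
  have : (Subgroup.center K).FiniteIndex := Subgroup.finiteIndex_of_le hker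
  have hKtors : IsMulTorsion K :=
    isMulTorsion_of_finiteIndex_center (G := K) (Subtype.val ⁻¹' F) hgen
      fun s hs => Submonoid.isOfFinOrder_coe.1 (hord s hs)
  exact finite_of_isMulTorsion_of_finiteIndex_center hKtors

/-- If `M` is generated by a set of elements of finite order and has a central subgroup `Z`
with `M/Z` locally finite, then `M` is locally finite. -/
theorem locallyFinite_of_central_quotient_locallyFinite
    {M : Type*} [Group M] (S : Set M) (hgen : Subgroup.closure S = ⊤)
    (hord : ∀ s ∈ S, IsOfFinOrder s)
    (Z : Subgroup M) [Z.Normal] (hZ : Z ≤ Subgroup.center M)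
    (hq : LocallyFiniteGroup (M ⧸ Z)) :
    LocallyFiniteGroup M := by
  rintro H ⟨T, rfl⟩
  choose A hAfin hAS hA using fun x : M =>
    exists_finite_subset_mem_closure (S := S) (x := x) (hgen ▸ Subgroup.mem_top x)
  let F : Set M := ⋃ t ∈ T, A t
  have hFfin : F.Finite := T.finite_toSet.biUnion fun t _ => hAfin t
  have hFS : F ⊆ S := Set.iUnion₂_subset fun t _ => hAS t
  let K : Subgroup M := Subgroup.closure F
  have hTK : Subgroup.closure (T : Set M) ≤ K := by
    rw [Subgroup.closure_le]
    intro t ht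
    exact Subgroup.closure_mono (Set.subset_biUnion_of_mem (u := A) ht) (hA t)
  have : Finite K :=
    finite_closure_of_central_quotient hFfin (fun s hs => hord s (hFS hs)) Z hZ hq
  exact Finite.of_injective _ (Subgroup.inclusion_injective hTK)
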